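/- Let B be a binary tree on V ∪ H with cost(B) ≤ C, and let φ: V → {1, …, n} be the bijection sending each v ∈ V to j − 1, where h_j (2 ≤ j ≤ n+1) is the unique neighbor of v among {h_2, …, h_{n+1}} in B. Then for all distinct u, v ∈ V, D_B(u, v) = |φ(u) − φ(v)| + 2, and consequently the linear arrangement cost of φ is at most X. -/

import Mathlib

/-!
Only pairs of consecutive `h`'s carry the demand `d₂`, and there are `n + 1` of them.  If one such
pair were not adjacent in `B`, the `d₂`-part of the cost alone would be at least `(n + 2) d₂`, which
exceeds `C` because `d₂ > n (n + 1) d₁ + X + 2m`.  Hence `h_1, …, h_{n+2}` is a path of `B`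
(`spine_adj`).

Paths in a tree are unique, so the path that runs along the spine and has the `V`-vertices hanging
at its ends realises the distance (`IsTree.dist_eq_length_of_isPath`, `exists_spine_path`).  This
gives `D_B(v, h_j) = |φ(v) + 1 - j| + 1` and `D_B(u, v) = |φ(u) - φ(v)| + 2`.

Consequently `D_B(v, h_2) + D_B(v, h_{n+1}) = n + 1` for every `v`, so the `d₁`- and `d₂`-parts of the
cost are exactly `n (n + 1) d₁` and `(n + 1) d₂`.  What `C` leaves for the edges of `G` is `X + 2m`,
whereas these edges cost the linear arrangement cost of `φ` plus `2m`.  The lower bound for the cost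
(`le_cost`) needs `h_2 ≠ h_{n+1}`, that is `n ≥ 2`; for `n = 1` there is no
pair of distinct vertices and the claim is trivial.
-/


open Finset SimpleGraph

/-- Vertex set `V ∪ H`: `V = {v_1, …, v_n}` as `Fin n` (0-indexed) and
`H = {h_1, …, h_{n+2}}` as `Fin (n+2)` (0-indexed, so `h_j` is `Sum.inr ⟨j-1, _⟩`). -/
abbrev Vtx (n : ℕ) : Type := Fin n ⊕ Fin (n + 2)

/-- The demand matrix of the reduction, with `d₁ = X + 2m + 1` and `d₂ = (n² + n + 1)·d₁`:
demand `1` between endpoints of edges of `G`, demand `d₁` between each `v ∈ V` and each of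
`h_2`, `h_{n+1}` (0-indexed: `1` and `n`), demand `d₂` between consecutive `h`'s, else `0`. -/
def demand (n m X : ℕ) (G : SimpleGraph (Fin n)) [DecidableRel G.Adj] :
    Vtx n → Vtx n → ℕ
  | Sum.inl i, Sum.inl j => if G.Adj i j then 1 else 0
  | Sum.inl _, Sum.inr j => if j.val = 1 ∨ j.val = n then X + 2 * m + 1 else 0
  | Sum.inr j, Sum.inl _ => if j.val = 1 ∨ j.val = n then X + 2 * m + 1 else 0
  | Sum.inr i, Sum.inr j =>
      if i.val + 1 = j.val ∨ j.val + 1 = i.val then (n ^ 2 + n + 1) * (X + 2 * m + 1) else 0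

lemma demand_symm (n m X : ℕ) (G : SimpleGraph (Fin n)) [DecidableRel G.Adj]
    (x y : Vtx n) : demand n m X G x y = demand n m X G y x := by
  cases x <;> cases y <;> simp [demand, SimpleGraph.adj_comm, or_comm]

/-- The cost of a network `B`: the sum over unordered pairs `{x, y}` of
`W(x,y) · D_B(x,y)` (diagonal pairs contribute `0` since `D_B(x,x) = 0`). -/
noncomputable def cost (n m X : ℕ) (G : SimpleGraph (Fin n)) [DecidableRel G.Adj]
    (B : SimpleGraph (Vtx n)) : ℕ :=
  ∑ p ∈ (Finset.univ : Finset (Vtx n)).sym2,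
    Sym2.lift ⟨fun x y => demand n m X G x y * B.dist x y,
      fun x y => by simp only []; rw [demand_symm, B.dist_comm]⟩ p

/-- The constant `C = (n+1)·d₂ + n·(n+1)·d₁ + X + 2m`. -/
def Cbound (n m X : ℕ) : ℕ :=
  (n + 1) * ((n ^ 2 + n + 1) * (X + 2 * m + 1)) + n * (n + 1) * (X + 2 * m + 1) + X + 2 * m

/-- A binary tree: a connected acyclic simple graph all of whose degrees are at most 3. -/
def IsBinaryTree {n : ℕ} (B : SimpleGraph (Vtx n)) : Prop :=
  B.IsTree ∧ ∀ x : Vtx n, (B.neighborSet x).ncard ≤ 3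

lemma IsTree.dist_eq_length_of_isPath {α : Type*} {B : SimpleGraph α} (hB : B.IsTree) {x y : α}
    (p : B.Walk x y) (hp : p.IsPath) : B.dist x y = p.length := by
  obtain ⟨q, hq, hq'⟩ := hB.connected.exists_path_of_dist x y
  have h := (hB.isAcyclic.subsingleton_path x y).elim ⟨p, hp⟩ ⟨q, hq⟩
  rw [Subtype.mk.injEq] at h
  rw [← hq', h]

/-- The distance in `B`, as a function of unordered pairs. -/
noncomputable def pairDist {α : Type*} (B : SimpleGraph α) : Sym2 α → ℕ :=
  Sym2.lift ⟨fun x y => B.dist x y, fun _ _ => B.dist_comm⟩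

/-- The unordered pairs of positive demand, listed by type: an edge of `G`, a pair of some `v ∈ V` with
`h_2` (`false`) or `h_{n+1}` (`true`), or a pair of consecutive `h`'s. -/
def demandPair (n : ℕ) (G : SimpleGraph (Fin n)) [DecidableRel G.Adj] :
    G.edgeFinset ⊕ ((Fin n × Bool) ⊕ Fin (n + 1)) → Sym2 (Vtx n)
  | Sum.inl e => e.1.map Sum.inl
  | Sum.inr (Sum.inl (v, false)) => s(Sum.inl v, Sum.inr 1)
  | Sum.inr (Sum.inl (v, true)) => s(Sum.inl v, Sum.inr ⟨n, by omega⟩)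
  | Sum.inr (Sum.inr i) => s(Sum.inr i.castSucc, Sum.inr i.succ)

/-- For `n = 1` this fails, as then `h_2 = h_{n+1}`. -/
lemma demandPair_injective (n : ℕ) (hn : 2 ≤ n) (G : SimpleGraph (Fin n)) [DecidableRel G.Adj] :
    Function.Injective (demandPair n G) := by
  have h1 : (1 : Fin (n + 2)) ≠ ⟨n, by omega⟩ := by
    intro h
    have := congrArg Fin.val h
    simp at this
    omega
  rintro (⟨e, he⟩ | ⟨v, _ | _⟩ | i) (⟨e', he'⟩ | ⟨v', _ | _⟩ | i') h
  · have := Sym2.map.injective Sum.inl_injective h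
    subst this
    rfl
  -- The mixed cases are impossible, which is visible once the edges of `G` are written `s(a, b)`.
  all_goals try (induction e with | _ a b => ?_)
  all_goals try (induction e' with | _ a' b' => ?_)
  all_goals simp [demandPair, h1, h1.symm] at h
  · simp [h]
  · simp [h]
  · rcases h with h | h
    · simp [h]
    · exfalso
      have h2 := congrArg Fin.val h.1
      have h3 := congrArg Fin.val h.2
      simp at h2 h3
      omega

lemma le_cost (n m X : ℕ) (hn : 2 ≤ n) (G : SimpleGraph (Fin n)) [DecidableRel G.Adj]
    (B : SimpleGraph (Vtx n)) :
    ∑ e ∈ G.edgeFinset, pairDist B (e.map Sum.inl)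
      + (X + 2 * m + 1) * ∑ v : Fin n, (B.dist (Sum.inl v) (Sum.inr 1)
          + B.dist (Sum.inl v) (Sum.inr ⟨n, by omega⟩))
      + (n ^ 2 + n + 1) * (X + 2 * m + 1) *
          ∑ i : Fin (n + 1), B.dist (Sum.inr i.castSucc) (Sum.inr i.succ)
      ≤ cost n m X G B := by
  unfold cost
  refine le_trans (le_of_eq ?_) (Finset.sum_le_sum_of_subset
    (s := Finset.univ.map ⟨demandPair n G, demandPair_injective n hn G⟩) ?_)
  · rw [Finset.sum_map, Fintype.sum_sum_type, Fintype.sum_sum_type, add_assoc]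
    congr 1
    · rw [← Finset.sum_coe_sort]
      refine Finset.sum_congr rfl ?_
      rintro ⟨e, he⟩ -
      induction e with | _ a b => ?_
      have hab : G.Adj a b := by simpa using he
      simp [demandPair, demand, pairDist, hab]
    congr 1
    · rw [Fintype.sum_prod_type, Finset.mul_sum]
      refine Finset.sum_congr rfl fun v _ => ?_
      simp [demandPair, demand]
      ring
    · rw [Finset.mul_sum]
      refine Finset.sum_congr rfl fun i _ => ?_
      simp [demandPair, demand]
  · intro x _
    simp

/-- Consecutive `h`'s are adjacent in a cheap tree. -/
lemma spine_adj (n m X : ℕ) (hn : 2 ≤ n) (G : SimpleGraph (Fin n)) [DecidableRel G.Adj]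
    (B : SimpleGraph (Vtx n)) (hB : B.Connected) (hc : cost n m X G B ≤ Cbound n m X)
    (i : Fin (n + 1)) : B.Adj (Sum.inr i.castSucc) (Sum.inr i.succ) := by
  by_contra hi
  have hne : ∀ j : Fin (n + 1), (Sum.inr j.castSucc : Vtx n) ≠ Sum.inr j.succ := by
    intro j h
    have := congrArg Fin.val (Sum.inr_injective h)
    simp at this
  have hlt : ∑ _j : Fin (n + 1), 1 <
      ∑ j : Fin (n + 1), B.dist (Sum.inr j.castSucc) (Sum.inr j.succ) :=
    Finset.sum_lt_sum (fun j _ => hB.pos_dist_of_ne (hne j))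
      ⟨i, Finset.mem_univ _, hB.one_lt_dist_of_ne_of_not_adj (hne i) hi⟩
  simp only [Finset.sum_const, Finset.card_univ, Fintype.card_fin, smul_eq_mul, mul_one] at hlt
  have hle := (Nat.le_add_left _ _).trans ((le_cost n m X hn G B).trans hc)
  have h2 := Nat.mul_le_mul_left ((n ^ 2 + n + 1) * (X + 2 * m + 1)) (Nat.succ_le_of_lt hlt)
  have h3 := h2.trans hle
  unfold Cbound at h3
  rw [Nat.succ_eq_add_one] at h3
  linarith

/-- The support clause says that the path stays on the spine and does not go past its final end; it
is what allows the path to be extended. -/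
lemma exists_spine_path (n : ℕ) (B : SimpleGraph (Vtx n))
    (hadj : ∀ i : Fin (n + 1), B.Adj (Sum.inr i.castSucc) (Sum.inr i.succ))
    (i k : ℕ) (h : i + k < n + 2) :
    ∃ p : B.Walk (Sum.inr ⟨i, by omega⟩) (Sum.inr ⟨i + k, h⟩), p.IsPath ∧ p.length = k ∧
      ∀ x ∈ p.support, ∃ l : Fin (n + 2), x = Sum.inr l ∧ l.val ≤ i + k := by
  induction k with
  | zero => exact ⟨Walk.nil, by simp, by simp, by simp⟩
  | succ k ih =>
    obtain ⟨p, hp, hl, hs⟩ := ih (by omega)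
    have ha : B.Adj (Sum.inr ⟨i + k, by omega⟩) (Sum.inr ⟨i + (k + 1), h⟩) :=
      hadj ⟨i + k, by omega⟩
    refine ⟨p.concat ha, hp.concat ?_ ha, by simp [hl], ?_⟩
    · intro hx
      obtain ⟨l, hl1, hl2⟩ := hs _ hx
      have := congrArg Fin.val (Sum.inr_injective hl1)
      simp at this
      omega
    · intro x hx
      rw [Walk.support_concat, List.mem_append, List.mem_singleton] at hx
      rcases hx with hx | rfl
      · obtain ⟨l, hl1, hl2⟩ := hs _ hx
        exact ⟨l, hl1, by omega⟩
      · exact ⟨_, rfl, le_rfl⟩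

section Spine

variable {n : ℕ} {B : SimpleGraph (Vtx n)}

lemma exists_spine_path_between
    (hadj : ∀ i : Fin (n + 1), B.Adj (Sum.inr i.castSucc) (Sum.inr i.succ))
    (i j : Fin (n + 2)) :
    ∃ p : B.Walk (Sum.inr i) (Sum.inr j), p.IsPath ∧
      p.length = ((i.val : ℤ) - (j.val : ℤ)).natAbs ∧ ∀ v, Sum.inl v ∉ p.support := by
  wlog hij : i ≤ j generalizing i j
  · obtain ⟨p, hp, hl, hs⟩ := this j i (le_of_not_ge hij)
    refine ⟨p.reverse, hp.reverse, ?_, by simpa using hs⟩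
    rw [Walk.length_reverse, hl]
    omega
  obtain ⟨i, hi⟩ := i
  obtain ⟨j, hj⟩ := j
  obtain ⟨k, rfl⟩ := Nat.exists_eq_add_of_le (show i ≤ j from hij)
  obtain ⟨p, hp, hl, hs⟩ := exists_spine_path n B hadj i k hj
  refine ⟨p, hp, ?_, ?_⟩
  · rw [hl]
    simp
  · intro v hv
    obtain ⟨l, hl, -⟩ := hs _ hv
    cases hl

lemma dist_leaf_spine (hB : B.IsTree)
    (hadj : ∀ i : Fin (n + 1), B.Adj (Sum.inr i.castSucc) (Sum.inr i.succ))
    (v : Fin n) (i j : Fin (n + 2)) (hv : B.Adj (Sum.inl v) (Sum.inr i)) :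
    B.dist (Sum.inl v) (Sum.inr j) = ((i.val : ℤ) - (j.val : ℤ)).natAbs + 1 := by
  obtain ⟨p, hp, hl, hs⟩ := exists_spine_path_between hadj i j
  rw [IsTree.dist_eq_length_of_isPath hB (Walk.cons hv p) (hp.cons (hs v)), Walk.length_cons, hl]

lemma dist_leaf_leaf (hB : B.IsTree)
    (hadj : ∀ i : Fin (n + 1), B.Adj (Sum.inr i.castSucc) (Sum.inr i.succ))
    (u v : Fin n) (huv : u ≠ v) (i j : Fin (n + 2)) (hu : B.Adj (Sum.inl u) (Sum.inr i))
    (hv : B.Adj (Sum.inl v) (Sum.inr j)) :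
    B.dist (Sum.inl u) (Sum.inl v) = ((i.val : ℤ) - (j.val : ℤ)).natAbs + 2 := by
  obtain ⟨p, hp, hl, hs⟩ := exists_spine_path_between hadj i j
  have hq : ((Walk.cons hu p).concat hv.symm).IsPath := by
    refine (hp.cons (hs u)).concat ?_ hv.symm
    rw [Walk.support_cons, List.mem_cons, not_or]
    exact ⟨fun h => huv (Sum.inl_injective h).symm, hs v⟩
  rw [IsTree.dist_eq_length_of_isPath hB _ hq, Walk.length_concat, Walk.length_cons, hl]

end Spine

/-- Let `B` be a binary tree on `V ∪ H` with `cost(B) ≤ C`, and let `φ`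
be the bijection `V → {1, …, n}` sending each `v` to `j − 1`, where `h_j` is the unique
neighbor of `v` among `{h_2, …, h_{n+1}}`.  With `ψ v` the 0-indexed neighbor index
(so the paper's `φ(v) = (ψ v).val ∈ {1, …, n}`), for all distinct `u, v ∈ V` we have
`D_B(u, v) = |φ(u) − φ(v)| + 2`, and the linear arrangement cost of `φ` is at most `X`. -/
theorem induced_arrangement_cheap (n m X : ℕ) (hn : 1 ≤ n) (G : SimpleGraph (Fin n))
    [DecidableRel G.Adj] (hm : G.edgeFinset.card = m)
    (B : SimpleGraph (Vtx n)) (hB : IsBinaryTree B)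
    (hc : cost n m X G B ≤ Cbound n m X)
    (ψ : Fin n → Fin (n + 2))
    (hψ : ∀ v : Fin n, 1 ≤ (ψ v).val ∧ (ψ v).val ≤ n ∧ B.Adj (Sum.inl v) (Sum.inr (ψ v)))
    (hψu : ∀ (v : Fin n) (j : Fin (n + 2)), 1 ≤ j.val → j.val ≤ n →
      B.Adj (Sum.inl v) (Sum.inr j) → j = ψ v)
    (hbij : Set.BijOn (fun v : Fin n => (ψ v).val) Set.univ (Set.Icc 1 n)) :
    (∀ u v : Fin n, u ≠ v →
      B.dist (Sum.inl u) (Sum.inl v) =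
        (((ψ u).val : ℤ) - ((ψ v).val : ℤ)).natAbs + 2) ∧
    (∑ e ∈ G.edgeFinset,
      Sym2.lift ⟨fun a b => (((ψ a).val : ℤ) - ((ψ b).val : ℤ)).natAbs,
        fun a b => by simp only []; rw [← Int.natAbs_neg, neg_sub]⟩ e) ≤ X := by
  obtain ⟨hT, -⟩ := hB
  obtain rfl | hn2 : n = 1 ∨ 2 ≤ n := by omega
  · refine ⟨fun u v huv => absurd (Subsingleton.elim u v) huv, ?_⟩
    rw [Finset.sum_eq_zero]
    · exact Nat.zero_le _
    · intro e _
      induction e with | _ a b => ?_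
      simp [Subsingleton.elim a b]
  have hadj := spine_adj n m X hn2 G B hT.connected hc
  have hdist : ∀ u v : Fin n, u ≠ v → B.dist (Sum.inl u) (Sum.inl v) =
      (((ψ u).val : ℤ) - ((ψ v).val : ℤ)).natAbs + 2 := fun u v huv =>
    dist_leaf_leaf hT hadj u v huv _ _ (hψ u).2.2 (hψ v).2.2
  refine ⟨hdist, ?_⟩
  have hle := (le_cost n m X hn2 G B).trans hc
  have hspine : ∑ i : Fin (n + 1), B.dist (Sum.inr i.castSucc) (Sum.inr i.succ) = n + 1 := by
    rw [Finset.sum_congr rfl fun i _ => dist_eq_one_iff_adj.mpr (hadj i)]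
    simp
  have hleaf : ∑ v : Fin n, (B.dist (Sum.inl v) (Sum.inr 1)
      + B.dist (Sum.inl v) (Sum.inr ⟨n, by omega⟩)) = n * (n + 1) := by
    have h : ∀ v : Fin n, B.dist (Sum.inl v) (Sum.inr 1)
        + B.dist (Sum.inl v) (Sum.inr ⟨n, by omega⟩) = n + 1 := by
      intro v
      obtain ⟨h1, h2, h3⟩ := hψ v
      rw [dist_leaf_spine hT hadj v _ _ h3, dist_leaf_spine hT hadj v _ _ h3, Fin.val_one]
      dsimp only
      omega
    simp [h]
  have hedge : ∑ e ∈ G.edgeFinset, pairDist B (e.map Sum.inl) =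
      (∑ e ∈ G.edgeFinset,
        Sym2.lift ⟨fun a b => (((ψ a).val : ℤ) - ((ψ b).val : ℤ)).natAbs,
          fun a b => by simp only []; rw [← Int.natAbs_neg, neg_sub]⟩ e) + 2 * m := by
    rw [← hm, mul_comm 2, ← smul_eq_mul, ← Finset.sum_const, ← Finset.sum_add_distrib]
    refine Finset.sum_congr rfl fun e he => ?_
    induction e with | _ a b => ?_
    have hab : G.Adj a b := by simpa using he
    simpa [pairDist] using hdist a b hab.ne
  rw [hspine, hleaf, hedge] at hle
  unfold Cbound at hle
  linarith
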